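/- Let p be a prime and let ℤ/p act smoothly (by diffeomorphisms) on the standard smooth sphere S^n. Suppose the action is semilinear with path-connected fixed point set, i.e.: the fixed point set (S^n)^{ℤ/p} is homeomorphic to the standard sphere S^k for some 0 < k ≤ n, and, in case k = n − 2, the complement S^n ∖ (S^n)^{ℤ/p} is homotopy equivalent to S^1. Then 2 ≤ TC^{ℤ/p}(S^n) ≤ 3. -/

import Mathlib

open Set unitInterval

namespace PaperTC

variable {G X : Type*}

/-- The orbit of `x` under the action `act`. -/
def orbit (act : G → X → X) (x : X) : Set X := {y | ∃ g, act g x = y}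

/-- The fixed point set of the action `act`. -/
def fixedSet (act : G → X → X) : Set X := {x | ∀ g, act g x = x}

/-- The fixed point set of a subset `S` of the acting group. -/
def fixedSetOf (act : G → X → X) (S : Set G) : Set X := {x | ∀ g ∈ S, act g x = x}

/-- `minCover P` is the least `k ≥ 1` satisfying `P k`, as an element of `ℕ∞`
(equal to `∞` if there is no such `k`). -/
noncomputable def minCover (P : ℕ → Prop) : ℕ∞ :=
  sInf {k : ℕ∞ | ∃ m : ℕ, k = m ∧ 1 ≤ m ∧ P m}

section Plain

variable (Y : Type*) [TopologicalSpace Y]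

/-- `Y × Y` can be covered by `k` open sets each admitting a motion planner. -/
def TCcover (k : ℕ) : Prop :=
  ∃ U : Fin k → Set (Y × Y),
    (∀ i, IsOpen (U i)) ∧ (⋃ i, U i) = univ ∧
    ∀ i, ∃ s : Y × Y → C(I, Y),
      ContinuousOn s (U i) ∧ ∀ p ∈ U i, s p 0 = p.1 ∧ s p 1 = p.2

/-- Topological complexity (non-reduced, possibly infinite). -/
noncomputable def TC : ℕ∞ := minCover (TCcover Y)

/-- `Y` can be covered by `k` open sets, each of which can be deformed within `Y`
to a point. -/
def catCover (k : ℕ) : Prop :=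
  ∃ U : Fin k → Set Y,
    (∀ i, IsOpen (U i)) ∧ (⋃ i, U i) = univ ∧
    ∀ i, ∃ H : Y × I → Y,
      ContinuousOn H (U i ×ˢ (univ : Set I)) ∧ (∀ x ∈ U i, H (x, 0) = x) ∧
      ∃ y₀, ∀ x ∈ U i, H (x, 1) = y₀

/-- Non-reduced Lusternik–Schnirelmann category. -/
noncomputable def cat : ℕ∞ := minCover (catCover Y)

end Plain

section Equivariant

variable [TopologicalSpace X] (act : G → X → X)

/-- `X × X` can be covered by `k` invariant open sets each admitting an
equivariant motion planner. -/
def eqTCcover (k : ℕ) : Prop :=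
  ∃ U : Fin k → Set (X × X),
    (∀ i, IsOpen (U i)) ∧ (⋃ i, U i) = univ ∧
    ∀ i, (∀ g p, p ∈ U i → (act g p.1, act g p.2) ∈ U i) ∧
      ∃ s : X × X → C(I, X),
        ContinuousOn s (U i) ∧
        (∀ p ∈ U i, s p 0 = p.1 ∧ s p 1 = p.2) ∧
        (∀ g p, p ∈ U i → ∀ t : I, s (act g p.1, act g p.2) t = act g (s p t))

/-- Equivariant topological complexity `TC_G` of Colman and Grant. -/
noncomputable def eqTC : ℕ∞ := minCover (eqTCcover act)

/-- `X × X` can be covered by `k` `(G × G)`-invariant open sets, each admitting a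
`(G × G)`-equivariant section of `π^G : P X ×_{X/G} P X → X × X`; such a section is
recorded by a pair of paths `s₁ p`, `s₂ p`, with the orbit of the endpoint of the first
equal to the orbit of the starting point of the second. -/
def invTCcover (k : ℕ) : Prop :=
  ∃ U : Fin k → Set (X × X),
    (∀ i, IsOpen (U i)) ∧ (⋃ i, U i) = univ ∧
    ∀ i, (∀ g₁ g₂ : G, ∀ p, p ∈ U i → (act g₁ p.1, act g₂ p.2) ∈ U i) ∧
      ∃ s₁ s₂ : X × X → C(I, X),
        ContinuousOn s₁ (U i) ∧ ContinuousOn s₂ (U i) ∧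
        (∀ p ∈ U i, s₁ p 0 = p.1 ∧ s₂ p 1 = p.2 ∧
          orbit act (s₁ p 1) = orbit act (s₂ p 0)) ∧
        (∀ g₁ g₂ : G, ∀ p, p ∈ U i → ∀ t : I,
          s₁ (act g₁ p.1, act g₂ p.2) t = act g₁ (s₁ p t) ∧
          s₂ (act g₁ p.1, act g₂ p.2) t = act g₂ (s₂ p t))

/-- Invariant topological complexity `TC^G` of Lubawski and Marzantowicz. -/
noncomputable def invTC : ℕ∞ := minCover (invTCcover act)

/-- The invariant open set `U` is `G`-compressible into `A`: the inclusion `U ↪ X` is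
`G`-equivariantly homotopic to a `G`-map with values in `A`. -/
def GCompressible (A : Set X) (U : Set X) : Prop :=
  (∀ g x, x ∈ U → act g x ∈ U) ∧
  ∃ H : X × I → X,
    ContinuousOn H (U ×ˢ (univ : Set I)) ∧ (∀ x ∈ U, H (x, 0) = x) ∧
    (∀ g x, x ∈ U → ∀ t : I, H (act g x, t) = act g (H (x, t))) ∧
    (∀ x ∈ U, H (x, 1) ∈ A)

/-- A `G`-categorical set: compressible into a single orbit. -/
def GCategorical (U : Set X) : Prop :=
  ∃ x₀ : X, GCompressible act (orbit act x₀) U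

/-- `X` can be covered by `k` open `G`-categorical sets. -/
def catGCover (k : ℕ) : Prop :=
  ∃ U : Fin k → Set X,
    (∀ i, IsOpen (U i)) ∧ (⋃ i, U i) = univ ∧ ∀ i, GCategorical act (U i)

/-- Equivariant Lusternik–Schnirelmann category `cat_G`. -/
noncomputable def catG : ℕ∞ := minCover (catGCover act)

/-- `X` can be covered by `k` open sets `G`-compressible into `{star}`. -/
def pointedCatGCover (star : X) (k : ℕ) : Prop :=
  ∃ U : Fin k → Set X,
    (∀ i, IsOpen (U i)) ∧ (⋃ i, U i) = univ ∧
    ∀ i, GCompressible act {star} (U i)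

/-- The pointed equivariant category `_{{⋆}}cat_G(X)`. -/
noncomputable def pointedCatG (star : X) : ℕ∞ := minCover (pointedCatGCover act star)

/-- `X` is `G`-contractible: the identity is `G`-homotopic to a map with values in a
single orbit. -/
def GContractible : Prop :=
  ∃ H : X × I → X,
    Continuous H ∧ (∀ x, H (x, 0) = x) ∧
    (∀ g x, ∀ t : I, H (act g x, t) = act g (H (x, t))) ∧
    ∃ x₀ : X, ∀ x, H (x, 1) ∈ orbit act x₀

end Equivariant

/-- The orbit space `X/G` with the quotient topology. -/
abbrev OrbitSpace (act : G → X → X) : Type _ := Quot (fun x y => ∃ g, act g x = y)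

end PaperTC
namespace PaperTC

/-- The unit sphere `S^n ⊆ ℝ^{n+1}` (with the Euclidean metric). -/
abbrev Sph (n : ℕ) : Set (EuclideanSpace ℝ (Fin (n + 1))) := Metric.sphere 0 1

/-- The action of `G` on the unit sphere `S^n` obtained by restricting an orthogonal
representation of `G` on `ℝ^{n+1}`. -/
noncomputable def sphereAct {G : Type*} [Monoid G] {n : ℕ}
    (ρ : G →* (EuclideanSpace ℝ (Fin (n + 1)) ≃ₗᵢ[ℝ] EuclideanSpace ℝ (Fin (n + 1)))) :
    G → ↥(Sph n) → ↥(Sph n) := fun g x =>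
  ⟨ρ g x, mem_sphere_zero_iff_norm.mpr (by
    rw [(ρ g).norm_map]; exact mem_sphere_zero_iff_norm.mp x.2)⟩

end PaperTC

open PaperTC Manifold

section NoRetraction

open MeasureTheory Polynomial

lemma det_interp {m : ℕ} (A : EuclideanSpace ℝ (Fin m) →L[ℝ] EuclideanSpace ℝ (Fin m))
    (s : Finset ℝ) (hs : s.card = m + 1) (t : ℝ) :
    ((1 : EuclideanSpace ℝ (Fin m) →L[ℝ] EuclideanSpace ℝ (Fin m)) + t • A).det =
      ∑ j ∈ s, (Lagrange.basis s id j).eval t *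
        ((1 : EuclideanSpace ℝ (Fin m) →L[ℝ] EuclideanSpace ℝ (Fin m)) + j • A).det := by
  classical
  let b := (EuclideanSpace.basisFun (Fin m) ℝ).toBasis
  let M : Matrix (Fin m) (Fin m) ℝ := LinearMap.toMatrix b b (A : _ →ₗ[ℝ] _)
  let P : ℝ[X] := Matrix.det ((X : ℝ[X]) • M.map C + (1 : Matrix (Fin m) (Fin m) ℝ).map C)
  have hP : ∀ u : ℝ, P.eval u =
      ((1 : EuclideanSpace ℝ (Fin m) →L[ℝ] EuclideanSpace ℝ (Fin m)) + u • A).det := by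
    intro u
    have h1 : ((1 : EuclideanSpace ℝ (Fin m) →L[ℝ] EuclideanSpace ℝ (Fin m)) + u • A).det
        = LinearMap.det ((1 : EuclideanSpace ℝ (Fin m) →ₗ[ℝ] EuclideanSpace ℝ (Fin m))
          + u • (A : EuclideanSpace ℝ (Fin m) →ₗ[ℝ] EuclideanSpace ℝ (Fin m))) := rfl
    rw [h1, ← LinearMap.det_toMatrix b]
    show (Polynomial.evalRingHom u) P = _
    simp only [P]
    rw [RingHom.map_det]
    congr 1
    ext i j
    simp only [map_add, map_smul, LinearMap.toMatrix_one, Matrix.add_apply, Matrix.smul_apply,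
      RingHom.mapMatrix_apply, Matrix.map_apply, smul_eq_mul, map_mul, coe_evalRingHom, eval_add,
      eval_mul, eval_X, eval_C, M]
    ring
  have hdeg : P.degree < s.card := by
    rw [hs]
    have h := Polynomial.natDegree_det_X_add_C_le M (1 : Matrix (Fin m) (Fin m) ℝ)
    rw [Fintype.card_fin] at h
    refine lt_of_le_of_lt Polynomial.degree_le_natDegree ?_
    exact_mod_cast Nat.lt_succ_of_le h
  have h := Lagrange.eq_interpolate (s := s) (v := id) (f := P) Function.injective_id.injOn hdeg
  rw [← hP t]
  conv_lhs => rw [h]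
  rw [Lagrange.interpolate_apply, Polynomial.eval_finsetSum]
  refine Finset.sum_congr rfl fun j _ => ?_
  simp only [id, eval_mul, eval_C, hP]
  ring

lemma bij_ball {m : ℕ} (g : EuclideanSpace ℝ (Fin m) → EuclideanSpace ℝ (Fin m)) (K : NNReal)
    (hg : LipschitzWith K g) (h0 : ∀ x, 1 ≤ ‖x‖ → g x = 0) (t : ℝ) (ht : 0 ≤ t) (htK : t * K < 1) :
    InjOn (fun x => x + t • g x) (Metric.ball 0 1) ∧
    (fun x => x + t • g x) '' (Metric.ball 0 1) = Metric.ball 0 1 := by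
  let f : EuclideanSpace ℝ (Fin m) → EuclideanSpace ℝ (Fin m) := fun x => x + t • g x
  have hinj : Function.Injective f := by
    intro x y hxy
    have h1 : x - y = - (t • (g x - g y)) := by
      simp only [f] at hxy
      rw [smul_sub, neg_sub, sub_eq_sub_iff_add_eq_add, add_comm (t • g y)]
      exact hxy
    have h2 : ‖x - y‖ ≤ t * K * ‖x - y‖ := by
      conv_lhs => rw [h1]
      rw [norm_neg, norm_smul, Real.norm_eq_abs, abs_of_nonneg ht, mul_assoc]
      gcongr
      exact hg.norm_sub_le x y
    have h3 : ‖x - y‖ = 0 := by nlinarith [norm_nonneg (x - y)]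
    exact sub_eq_zero.mp (norm_eq_zero.mp h3)
  have hsurj : Function.Surjective f := by
    intro y
    have hc : ContractingWith (Real.toNNReal t * K) (fun x => y - t • g x) := by
      refine ⟨by
        rw [← NNReal.coe_lt_coe, NNReal.coe_mul, Real.coe_toNNReal t ht]; exact_mod_cast htK,
        LipschitzWith.of_dist_le_mul fun a b => ?_⟩
      rw [dist_eq_norm, dist_eq_norm]
      have : y - t • g a - (y - t • g b) = - (t • (g a - g b)) := by rw [smul_sub]; abel
      rw [this, norm_neg, norm_smul, Real.norm_eq_abs, abs_of_nonneg ht]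
      rw [NNReal.coe_mul, Real.coe_toNNReal t ht, mul_assoc]
      gcongr
      exact hg.norm_sub_le a b
    refine ⟨hc.fixedPoint, ?_⟩
    have := hc.fixedPoint_isFixedPt
    simp only [Function.IsFixedPt] at this
    simp only [f]
    nth_rw 1 [← this]
    simp
  have hout : ∀ x, 1 ≤ ‖x‖ → f x = x := fun x hx => by simp [f, h0 x hx]
  refine ⟨hinj.injOn, ?_⟩
  ext y
  simp only [mem_image, Metric.mem_ball, dist_zero_right]
  constructor
  · rintro ⟨x, hx, rfl⟩
    by_contra hy
    push Not at hy
    have : f (f x) = f x := hout _ hy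
    have := hinj this
    simp only [f] at this
    rw [this] at hy
    linarith
  · intro hy
    obtain ⟨x, hx⟩ := hsurj y
    refine ⟨x, ?_, hx⟩
    by_contra hx'
    push Not at hx'
    have := hout x hx'
    rw [hx] at this
    rw [this] at hy
    linarith

lemma ext_lipschitz {m : ℕ} (g : EuclideanSpace ℝ (Fin m) → EuclideanSpace ℝ (Fin m)) (K : NNReal)
    (hg : LipschitzOnWith K g (Metric.closedBall 0 1)) (h0 : ∀ x, ‖x‖ = 1 → g x = 0)
    (e : EuclideanSpace ℝ (Fin m)) (he : ‖e‖ = 1) :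
    LipschitzWith K (fun x => if ‖x‖ ≤ 1 then g x else 0) := by
  have key : ∀ x y : EuclideanSpace ℝ (Fin m), ‖x‖ ≤ 1 → 1 < ‖y‖ → ‖g x‖ ≤ K * ‖x - y‖ := by
    intro x y hx hy
    have hz : ∃ z : EuclideanSpace ℝ (Fin m), ‖z‖ = 1 ∧ ‖x - z‖ = 1 - ‖x‖ := by
      by_cases hx0 : x = 0
      · exact ⟨e, he, by simp [hx0, he]⟩
      · have hn : ‖x‖ ≠ 0 := norm_ne_zero_iff.mpr hx0
        have hp : 0 < ‖x‖ := norm_pos_iff.mpr hx0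
        refine ⟨‖x‖⁻¹ • x, by rw [norm_smul, norm_inv, norm_norm, inv_mul_cancel₀ hn], ?_⟩
        have : x - ‖x‖⁻¹ • x = (1 - ‖x‖⁻¹) • x := by rw [sub_smul, one_smul]
        have h1 : 1 ≤ ‖x‖⁻¹ := (one_le_inv₀ hp).mpr hx
        rw [this, norm_smul, Real.norm_eq_abs, abs_of_nonpos (by linarith)]
        field_simp
        ring
    obtain ⟨z, hz1, hz2⟩ := hz
    have h1 := hg.norm_sub_le (x := x) (y := z) (by simpa using hx) (by simp [hz1])
    rw [h0 z hz1, sub_zero, hz2] at h1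
    refine h1.trans ?_
    gcongr
    have := norm_sub_norm_le y x
    rw [norm_sub_rev] at this
    linarith
  refine LipschitzWith.of_dist_le_mul fun x y => ?_
  rw [dist_eq_norm, dist_eq_norm]
  by_cases hx : ‖x‖ ≤ 1 <;> by_cases hy : ‖y‖ ≤ 1 <;> simp only [hx, hy, if_true, if_false]
  · exact hg.norm_sub_le (by simpa using hx) (by simpa using hy)
  · rw [sub_zero]; exact key x y hx (not_le.mp hy)
  · rw [zero_sub, norm_neg, norm_sub_rev]; exact key y x hy (not_le.mp hx)
  · simp; positivity

theorem no_smooth_retraction {m : ℕ}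
    (r : EuclideanSpace ℝ (Fin m) → EuclideanSpace ℝ (Fin m)) (hr : ContDiff ℝ 1 r)
    (h1 : ∀ x, ‖r x‖ = 1) (h2 : ∀ x, ‖x‖ = 1 → r x = x) : False := by
  let E := EuclideanSpace ℝ (Fin m)
  let g : E → E := fun x => r x - x
  have hgd : ContDiff ℝ 1 g := hr.sub contDiff_id
  obtain ⟨K, hK⟩ := hgd.locallyLipschitz.locallyLipschitzOn.exists_lipschitzOnWith_of_compact
    (isCompact_closedBall (0 : E) 1)
  let gt : E → E := fun x => if ‖x‖ ≤ 1 then g x else 0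
  have hgt : LipschitzWith K gt := ext_lipschitz g K hK (fun x hx => by simp [g, h2 x hx]) (r 0) (h1 0)
  have hgt0 : ∀ x, 1 ≤ ‖x‖ → gt x = 0 := by
    intro x hx
    simp only [gt]
    split_ifs with h
    · simp [g, h2 x (le_antisymm h hx)]
    · rfl
  -- derivative
  let A : E → E →L[ℝ] E := fun x => fderiv ℝ g x
  have hA : Continuous A := hgd.continuous_fderiv (by norm_num)
  have hdetc : ∀ t : ℝ, Continuous fun x => ((1 : E →L[ℝ] E) + t • A x).det := fun t =>
    ContinuousLinearMap.continuous_det.comp (continuous_const.add (hA.const_smul t))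
  have hint : ∀ t : ℝ, IntegrableOn (fun x => ((1 : E →L[ℝ] E) + t • A x).det)
      (Metric.ball (0 : E) 1) := fun t =>
    ((hdetc t).continuousOn.integrableOn_compact (isCompact_closedBall (0 : E) 1)).mono_set
      Metric.ball_subset_closedBall
  -- bound for A
  have hAbd : ∃ C, 0 < C ∧ ∀ x ∈ Metric.ball (0 : E) 1, ‖A x‖ ≤ C := by
    obtain ⟨C, hC⟩ := (isCompact_closedBall (0 : E) 1).exists_bound_of_continuousOn hA.continuousOn
    exact ⟨max C 1, by positivity, fun x hx =>
      (hC x (Metric.ball_subset_closedBall hx)).trans (le_max_left _ _)⟩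
  obtain ⟨C, hC0, hC⟩ := hAbd
  -- det positive near 1
  have hpos : ∃ δ > 0, ∀ B : E →L[ℝ] E, ‖B‖ < δ → 0 < ((1 : E →L[ℝ] E) + B).det := by
    have hc : Continuous fun B : E →L[ℝ] E => ((1 : E →L[ℝ] E) + B).det :=
      ContinuousLinearMap.continuous_det.comp (continuous_const.add continuous_id)
    have h0 : (0 : ℝ) < ((1 : E →L[ℝ] E) + 0).det := by
      rw [add_zero]
      have : (1 : E →L[ℝ] E).det = 1 := LinearMap.det_id
      rw [this]; norm_num
    have := (hc.tendsto 0).eventually (lt_mem_nhds h0)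
    obtain ⟨δ, hδ, h⟩ := Metric.eventually_nhds_iff.mp this
    exact ⟨δ, hδ, fun B hB => h (by simpa using hB)⟩
  obtain ⟨δ, hδ, hpos⟩ := hpos
  let V : ℝ → ℝ := fun t => ∫ x in Metric.ball (0 : E) 1, ((1 : E →L[ℝ] E) + t • A x).det
  have hsmall : ∀ t : ℝ, 0 ≤ t → t * K < 1 → t * C < δ →
      V t = (volume : Measure E).real (Metric.ball (0 : E) 1) := by
    intro t ht htK htC
    obtain ⟨hi, him⟩ := bij_ball gt K hgt hgt0 t ht htK
    have heq : ∀ x ∈ Metric.ball (0 : E) 1, x + t • gt x = x + t • g x := by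
      intro x hx
      have : ‖x‖ ≤ 1 := by simpa using (Metric.ball_subset_closedBall hx)
      simp [gt, this]
    have hi' : InjOn (fun x => x + t • g x) (Metric.ball (0 : E) 1) := hi.congr heq
    have him' : (fun x => x + t • g x) '' (Metric.ball (0 : E) 1) = Metric.ball 0 1 := by
      exact (image_congr fun x hx => (heq x hx).symm).trans him
    have hder : ∀ x ∈ Metric.ball (0 : E) 1, HasFDerivWithinAt (fun x => x + t • g x)
        ((1 : E →L[ℝ] E) + t • A x) (Metric.ball (0 : E) 1) x := by
      intro x _
      have hgx : HasFDerivAt g (A x) x := (hgd.differentiable (by norm_num) x).hasFDerivAt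
      exact ((hasFDerivAt_id x).add (hgx.const_smul t)).hasFDerivWithinAt
    have hcv := integral_image_eq_integral_abs_det_fderiv_smul volume
      (measurableSet_ball (x := (0 : E)) (ε := 1)) hder hi' (fun _ => (1 : ℝ))
    rw [him'] at hcv
    simp only [smul_eq_mul, mul_one] at hcv
    rw [show (volume : Measure E).real (Metric.ball (0 : E) 1) = ∫ x in Metric.ball (0 : E) 1, (1 : ℝ)
      by simp, hcv]
    refine setIntegral_congr_fun measurableSet_ball fun x hx => ?_
    have : 0 < ((1 : E →L[ℝ] E) + t • A x).det := by
      apply hpos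
      rw [norm_smul, Real.norm_eq_abs, abs_of_nonneg ht]
      exact lt_of_le_of_lt (mul_le_mul_of_nonneg_left (hC x hx) ht) htC
    exact (abs_of_pos this).symm
  -- nodes
  obtain ⟨η, hη, hηK, hηC⟩ : ∃ η : ℝ, 0 < η ∧ η * K < 1 ∧ η * C < δ := by
    refine ⟨min (1 / (K + 1)) (δ / (2 * C)), by positivity, ?_, ?_⟩
    · have hK0 : (0 : ℝ) ≤ K := K.2
      calc _ ≤ 1 / ((K : ℝ) + 1) * K := by gcongr; exact min_le_left _ _
        _ < 1 := by rw [div_mul_eq_mul_div, div_lt_one (by positivity)]; linarith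
    · calc _ ≤ δ / (2 * C) * C := by gcongr; exact min_le_right _ _
        _ < δ := by field_simp; linarith
  obtain ⟨s, hsub, hcard⟩ := (Set.Ioo_infinite hη).exists_subset_card_eq (m + 1)
  have hsV : ∀ j ∈ s, V j = (volume : Measure E).real (Metric.ball (0 : E) 1) := by
    intro j hj
    have hj' : j ∈ Ioo 0 η := hsub hj
    refine hsmall j hj'.1.le ?_ ?_
    · exact lt_of_le_of_lt (mul_le_mul_of_nonneg_right hj'.2.le K.2) hηK
    · exact lt_of_le_of_lt (mul_le_mul_of_nonneg_right hj'.2.le hC0.le) hηC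
  have hV1 : V 1 = (volume : Measure E).real (Metric.ball (0 : E) 1) := by
    have : V 1 = ∑ j ∈ s, (Lagrange.basis s id j).eval 1 * V j := by
      simp only [V]
      simp_rw [fun x => det_interp (A x) s hcard 1]
      rw [integral_finsetSum _ (fun j _ => (hint j).const_mul _)]
      simp_rw [integral_const_mul]
    rw [this, Finset.sum_congr rfl fun j hj => by rw [hsV j hj], ← Finset.sum_mul,
      ← Polynomial.eval_finsetSum, Lagrange.sum_basis Function.injective_id.injOn
        (Finset.card_pos.mp (by omega))]
    simp
  have hV0 : V 1 = 0 := by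
    simp only [V]
    rw [← integral_zero E ℝ (μ := volume.restrict (Metric.ball (0 : E) 1))]
    congr 1
    ext x
    have hrx : HasFDerivAt r ((1 : E →L[ℝ] E) + (1 : ℝ) • A x) x := by
      have hgx : HasFDerivAt g (A x) x := (hgd.differentiable (by norm_num) x).hasFDerivAt
      have := (hasFDerivAt_id x).add hgx
      rw [one_smul]
      refine this.congr_of_eventuallyEq (Filter.Eventually.of_forall fun y => ?_)
      simp [g]
    set B := (1 : E →L[ℝ] E) + (1 : ℝ) • A x
    by_contra hne
    have hne' : LinearMap.det (B : E →ₗ[ℝ] E) ≠ 0 := hne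
    have hsurj : Function.Surjective B := by
      have hu := (LinearMap.isUnit_iff_isUnit_det (B : E →ₗ[ℝ] E)).mpr (isUnit_iff_ne_zero.mpr hne')
      exact ((Module.End.isUnit_iff _).mp hu).2
    obtain ⟨u, hu⟩ := hsurj (r x)
    have hd : HasFDerivAt (fun y => inner ℝ (r y) (r y)) _ x := hrx.inner ℝ hrx
    have hc : (fun y => inner ℝ (r y) (r y)) = fun _ : E => (1 : ℝ) := by
      ext y; rw [real_inner_self_eq_norm_sq, h1]; norm_num
    rw [hc] at hd
    have := hd.unique (hasFDerivAt_const (1 : ℝ) x)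
    have h3 := congrArg (fun L => L u) this
    simp [hu, h1] at h3
  rw [hV0] at hV1
  have : 0 < (volume : Measure E).real (Metric.ball (0 : E) 1) := by
    rw [Measure.real, ENNReal.toReal_pos_iff]
    exact ⟨Metric.measure_ball_pos _ _ one_pos, measure_ball_lt_top⟩
  linarith

end NoRetraction

section NotContractible

/-- normalization -/
noncomputable def nrmz {m : ℕ} (x : {x : EuclideanSpace ℝ (Fin m) // x ≠ 0}) :
    ↥(Metric.sphere (0 : EuclideanSpace ℝ (Fin m)) 1) :=
  ⟨‖x.1‖⁻¹ • x.1, by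
    have : ‖x.1‖ ≠ 0 := norm_ne_zero_iff.mpr x.2
    rw [mem_sphere_zero_iff_norm, norm_smul, norm_inv, norm_norm, inv_mul_cancel₀ this]⟩

lemma nrmz_cont {m : ℕ} : Continuous (nrmz (m := m)) := by
  refine Continuous.subtype_mk ?_ _
  exact (continuous_subtype_val.norm.inv₀ fun x => norm_ne_zero_iff.mpr x.2).smul
    continuous_subtype_val

lemma contDiffOn_nrmz {m : ℕ} {n : WithTop ℕ∞} {U : Set (EuclideanSpace ℝ (Fin m))}
    (hU : ∀ x ∈ U, x ≠ 0) : ContDiffOn ℝ n (fun x => ‖x‖⁻¹ • x) U := by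
  intro x hx
  have h1 : ContDiffAt ℝ n (fun x : EuclideanSpace ℝ (Fin m) => ‖x‖) x :=
    contDiffAt_norm ℝ (hU x hx)
  exact ((h1.inv (norm_ne_zero_iff.mpr (hU x hx))).smul contDiffAt_id).contDiffWithinAt

theorem sphere_no_contraction {m : ℕ}
    (H : C(I × ↥(Metric.sphere (0 : EuclideanSpace ℝ (Fin m)) 1),
      ↥(Metric.sphere (0 : EuclideanSpace ℝ (Fin m)) 1)))
    (y₀ : ↥(Metric.sphere (0 : EuclideanSpace ℝ (Fin m)) 1))
    (h0 : ∀ x, H (0, x) = x) (h1 : ∀ x, H (1, x) = y₀) : False := by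
  classical
  let E := EuclideanSpace ℝ (Fin m)
  let τ : E → I := fun x => projIcc 0 1 zero_le_one (2 - 4 * ‖x‖)
  have hτ : Continuous τ := continuous_projIcc.comp (by fun_prop)
  let f : E → E := fun x => if hx : x = 0 then y₀.1 else (H (τ x, nrmz ⟨x, hx⟩)).1
  have hf1 : ∀ x, ‖f x‖ = 1 := by
    intro x
    simp only [f]
    split_ifs
    · exact mem_sphere_zero_iff_norm.mp y₀.2
    · exact mem_sphere_zero_iff_norm.mp (H _).2
  have hfc : Continuous f := by
    rw [continuous_iff_continuousAt]
    intro x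
    by_cases hx : x = 0
    · subst hx
      have : f =ᶠ[nhds 0] fun _ => y₀.1 := by
        filter_upwards [Metric.ball_mem_nhds (0 : E) (show (0 : ℝ) < 1 / 4 by norm_num)] with z hz
        have hz' : ‖z‖ < 1 / 4 := by simpa using hz
        simp only [f]
        split_ifs
        · rfl
        · have : τ z = 1 := by
            simp only [τ]
            exact projIcc_of_right_le _ (by linarith)
          rw [this, h1]
      exact continuousAt_const.congr this.symm
    · have hon : ContinuousOn f {x | x ≠ 0} := by
        rw [continuousOn_iff_continuous_restrict]
        have : ({x : E | x ≠ 0}).domRestrict f = fun x => (H (τ x.1, nrmz x)).1 := by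
          ext1 x
          have hx : ¬ x.1 = 0 := x.2
          simp only [Set.domRestrict_apply, f, hx, dite_false]
          rfl
        rw [this]
        exact continuous_subtype_val.comp (H.continuous.comp
          ((hτ.comp continuous_subtype_val).prodMk nrmz_cont))
      exact hon.continuousAt (isOpen_ne.mem_nhds hx)
  have hfout : ∀ x, 1 / 2 ≤ ‖x‖ → f x = ‖x‖⁻¹ • x := by
    intro x hx
    have hx0 : x ≠ 0 := by
      rintro rfl; rw [norm_zero] at hx; linarith
    have : τ x = 0 := by
      simp only [τ]
      exact projIcc_of_le_left _ (by linarith)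
    simp only [f, hx0, dite_false, this, h0]
    rfl
  let t : E → Set E := fun x => {y | ‖y - f x‖ < 1 / 2 ∧ (1 ≤ ‖x‖ → y = ‖x‖⁻¹ • x)}
  have htc : ∀ x, Convex ℝ (t x) := by
    intro x
    have : t x = Metric.ball (f x) (1 / 2) ∩ {y | 1 ≤ ‖x‖ → y = ‖x‖⁻¹ • x} := by
      ext y; rw [mem_inter_iff, Metric.mem_ball, dist_eq_norm]; exact Iff.rfl
    rw [this]
    refine (convex_ball _ _).inter ?_
    by_cases hx : 1 ≤ ‖x‖
    · simp only [hx, forall_true_left]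
      exact convex_singleton _
    · simp only [hx, false_imp_iff]; exact convex_univ
  obtain ⟨F, hF⟩ := exists_contMDiffMap_forall_mem_convex_of_local (n := (1 : ℕ∞)) 𝓘(ℝ, E) htc (by
    intro x
    by_cases hx : ‖x‖ ≤ 1 / 2
    · refine ⟨{z | ‖z‖ < 1 ∧ ‖f x - f z‖ < 1 / 2}, ?_, fun _ => f x, contMDiffOn_const, ?_⟩
      · refine IsOpen.mem_nhds ?_ ⟨by linarith, by simp⟩
        exact (isOpen_lt continuous_norm continuous_const).inter
          (isOpen_lt (continuous_const.sub hfc).norm continuous_const)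
      · intro z hz
        exact ⟨hz.2, fun h => absurd h (not_le.mpr hz.1)⟩
    · refine ⟨{z | 1 / 2 < ‖z‖}, ?_, fun z => ‖z‖⁻¹ • z, ?_, ?_⟩
      · exact IsOpen.mem_nhds (isOpen_lt continuous_const continuous_norm) (not_le.mp hx)
      · rw [contMDiffOn_iff_contDiffOn]
        refine contDiffOn_nrmz fun z hz => ?_
        rintro rfl
        have hz' : 1 / 2 < ‖(0 : E)‖ := hz
        rw [norm_zero] at hz'
        linarith
      · intro z hz
        refine ⟨?_, fun _ => rfl⟩
        rw [hfout z (le_of_lt hz), sub_self, norm_zero]; norm_num)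
  have hFd : ContDiff ℝ 1 (F : E → E) := by
    have := F.contMDiff
    rw [contMDiff_iff_contDiff] at this
    exact_mod_cast this
  have hFne : ∀ x, F x ≠ 0 := by
    intro x hx
    have := (hF x).1
    rw [hx, zero_sub, norm_neg, hf1] at this
    linarith
  refine no_smooth_retraction (fun x => ‖F x‖⁻¹ • F x) ?_ ?_ ?_
  · exact contDiff_iff_contDiffAt.mpr fun x =>
      (((hFd.contDiffAt).norm ℝ (hFne x)).inv (norm_ne_zero_iff.mpr (hFne x))).smul hFd.contDiffAt
  · intro x
    have : ‖F x‖ ≠ 0 := norm_ne_zero_iff.mpr (hFne x)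
    rw [norm_smul, norm_inv, norm_norm, inv_mul_cancel₀ this]
  · intro x hx
    have := (hF x).2 hx.ge
    rw [hx] at this
    simp only [inv_one, one_smul] at this
    simp [this, hx]

end NotContractible

section Averaging

open PaperTC

lemma smooth_ext {n : ℕ} (φ : ↥(Sph n) → ↥(Sph n))
    (hφ : ContMDiff (𝓡 n) (𝓡 n) (⊤ : ℕ∞) φ) :
    ∃ Ψ : EuclideanSpace ℝ (Fin (n + 1)) → EuclideanSpace ℝ (Fin (n + 1)), ContDiff ℝ 2 Ψ ∧
      ∀ x (hx : x ≠ 0), 1 / 2 ≤ ‖x‖ → Ψ x = (φ (nrmz ⟨x, hx⟩)).1 := by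
  classical
  let E := EuclideanSpace ℝ (Fin (n + 1))
  have : Fact (Module.finrank ℝ E = n + 1) := ⟨finrank_euclideanSpace_fin⟩
  let U : TopologicalSpace.Opens E := ⟨{x | x ≠ 0}, isOpen_ne⟩
  have h1 : ContMDiff 𝓘(ℝ, E) 𝓘(ℝ, E) (⊤ : ℕ∞) (fun z : U => ‖z.1‖⁻¹ • z.1) := by
    intro z
    have hz : z.1 ≠ 0 := z.2
    have h : ContMDiffAt 𝓘(ℝ, E) 𝓘(ℝ, E) (⊤ : ℕ∞) (fun z : E => ‖z‖⁻¹ • z) z.1 := by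
      rw [contMDiffAt_iff_contDiffAt]
      exact (((contDiffAt_norm ℝ hz)).inv (norm_ne_zero_iff.mpr hz)).smul contDiffAt_id
    exact contMDiffAt_subtype_iff.mpr h
  have h2 : ContMDiff 𝓘(ℝ, E) (𝓡 n) (⊤ : ℕ∞) (fun z : U => nrmz (⟨z.1, z.2⟩ : {x : E // x ≠ 0})) :=
    h1.codRestrict_sphere (fun z => (nrmz (⟨z.1, z.2⟩ : {x : E // x ≠ 0})).2)
  let ψ : E → E := fun z => if hz : z = 0 then 0 else (φ (nrmz ⟨z, hz⟩)).1
  have h3 : ContMDiff 𝓘(ℝ, E) 𝓘(ℝ, E) (⊤ : ℕ∞) (fun z : U => ψ z.1) := by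
    have := (contMDiff_coe_sphere (E := E) (m := (⊤ : ℕ∞)) (n := n)).comp (hφ.comp h2)
    refine this.congr fun z => ?_
    have hz : ¬ z.1 = 0 := z.2
    simp only [ψ, hz, dite_false]
    rfl
  have h4 : ContDiffOn ℝ (⊤ : ℕ∞) ψ {x | x ≠ 0} := by
    intro z hz
    have := contMDiffAt_subtype_iff.mp (h3 ⟨z, hz⟩)
    rw [contMDiffAt_iff_contDiffAt] at this
    exact this.contDiffWithinAt
  let t : E → Set E := fun x => {y | 1 / 2 ≤ ‖x‖ → y = ψ x}
  have htc : ∀ x, Convex ℝ (t x) := by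
    intro x
    by_cases hx : 1 / 2 ≤ ‖x‖
    · have : t x = {ψ x} := by
        ext y; exact ⟨fun h => h hx, fun h _ => h⟩
      rw [this]
      exact convex_singleton _
    · have : t x = univ := by
        ext y; exact ⟨fun h => trivial, fun _ h => absurd h hx⟩
      rw [this]; exact convex_univ
  obtain ⟨F, hF⟩ := exists_contMDiffMap_forall_mem_convex_of_local (n := (2 : ℕ∞)) 𝓘(ℝ, E) htc (by
    intro x
    by_cases hx : x = 0
    · refine ⟨{z | ‖z‖ < 1 / 2}, ?_, fun _ => 0, contMDiffOn_const, ?_⟩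
      · refine IsOpen.mem_nhds (isOpen_lt continuous_norm continuous_const) ?_
        show ‖x‖ < 1 / 2
        rw [hx, norm_zero]; norm_num
      · intro z hz h
        exact absurd h (not_le.mpr hz)
    · refine ⟨{z | z ≠ 0}, isOpen_ne.mem_nhds hx, ψ, ?_, fun z _ _ => rfl⟩
      rw [contMDiffOn_iff_contDiffOn]
      exact h4.of_le (by exact_mod_cast le_top))
  refine ⟨F, ?_, ?_⟩
  · have := F.contMDiff
    rw [contMDiff_iff_contDiff] at this
    exact_mod_cast this
  · intro x hx h
    have := hF x h
    rw [this]
    simp only [ψ, hx, dite_false]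

lemma taylor_bound {n : ℕ} (Ψ : EuclideanSpace ℝ (Fin n) → EuclideanSpace ℝ (Fin n))
    (hΨ : ContDiff ℝ 2 Ψ) : ∃ C : ℝ, 0 ≤ C ∧ ∀ x y, ‖x‖ = 1 → ‖y‖ = 1 →
      ‖Ψ y - Ψ x - fderiv ℝ Ψ x (y - x)‖ ≤ C * ‖y - x‖ ^ 2 := by
  have h1 : ContDiff ℝ 1 (fderiv ℝ Ψ) := hΨ.fderiv_right (by norm_num)
  obtain ⟨K, hK⟩ := h1.locallyLipschitz.locallyLipschitzOn.exists_lipschitzOnWith_of_compact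
    (isCompact_closedBall (0 : EuclideanSpace ℝ (Fin n)) 1)
  refine ⟨K, K.2, fun x y hx hy => ?_⟩
  have hsub : segment ℝ x y ⊆ Metric.closedBall 0 1 :=
    (convex_closedBall _ _).segment_subset (by simp [hx]) (by simp [hy])
  have := (convex_segment x y).norm_image_sub_le_of_norm_fderiv_le' (f := Ψ) (𝕜 := ℝ)
    (φ := fderiv ℝ Ψ x) (C := K * ‖y - x‖)
    (fun z _ => hΨ.differentiable (by norm_num) z) ?_ (left_mem_segment ℝ x y)
    (right_mem_segment ℝ x y)
  · rw [pow_two, ← mul_assoc]; exact this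
  · intro z hz
    refine (hK.norm_sub_le (hsub hz) (hsub (left_mem_segment ℝ x y))).trans ?_
    gcongr
    exact norm_sub_le_of_mem_segment hz

lemma argmin_continuousOn {Y X : Type*} [TopologicalSpace Y] [TopologicalSpace X] [CompactSpace X]
    (Q : Y → X → ℝ) (hQ : Continuous (Function.uncurry Q)) (D : Set Y)
    (μ : Y → X) (hμ : ∀ m ∈ D, ∀ x, Q m (μ m) ≤ Q m x)
    (huniq : ∀ m ∈ D, ∀ x y, (∀ z, Q m x ≤ Q m z) → (∀ z, Q m y ≤ Q m z) → x = y) :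
    ContinuousOn μ D := by
  rw [continuousOn_iff_continuous_restrict]
  rw [continuous_iff_isClosed]
  intro S hS
  have hg : IsClosed {q : D × X | (∀ z, Q q.1 q.2 ≤ Q q.1 z) ∧ q.2 ∈ S} := by
    have hc : Continuous fun q : D × X => Q q.1 q.2 :=
      hQ.comp ((continuous_subtype_val.comp continuous_fst).prodMk continuous_snd)
    have h1 : IsClosed {q : D × X | ∀ z, Q q.1 q.2 ≤ Q q.1 z} := by
      rw [Set.ofPred_forall]
      refine isClosed_iInter fun z => isClosed_le hc ?_
      exact hQ.comp ((continuous_subtype_val.comp continuous_fst).prodMk continuous_const)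
    exact h1.inter (hS.preimage continuous_snd)
  have := isClosedMap_fst_of_compactSpace _ hg
  convert this using 1
  ext m
  constructor
  · intro h
    exact ⟨(m, μ m), ⟨hμ m m.2, h⟩, rfl⟩
  · rintro ⟨⟨m', x⟩, ⟨h1, h2⟩, rfl⟩
    have : x = μ m' := huniq m' m'.2 _ _ h1 (hμ m' m'.2)
    show μ m' ∈ S
    rw [← this]; exact h2

end Averaging

section Averaging2

open PaperTC

lemma nrmz_sphere {n : ℕ} (x : ↥(Sph n)) (hx : x.1 ≠ 0) : nrmz ⟨x.1, hx⟩ = x := by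
  have h : ‖x.1‖ = 1 := mem_sphere_zero_iff_norm.mp x.2
  apply Subtype.ext
  show ‖x.1‖⁻¹ • x.1 = x.1
  rw [h, inv_one, one_smul]

lemma sph_ne_zero {n : ℕ} (x : ↥(Sph n)) : x.1 ≠ 0 := by
  have h : ‖x.1‖ = 1 := mem_sphere_zero_iff_norm.mp x.2
  intro h0
  rw [h0, norm_zero] at h
  exact zero_ne_one h

set_option maxHeartbeats 2000000 in
lemma averaging {p : ℕ} [NeZero p] {n : ℕ} (act : ZMod p → ↥(Sph n) → ↥(Sph n))
    (act_zero : ∀ x, act 0 x = x)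
    (act_add : ∀ g h x, act (g + h) x = act g (act h x))
    (act_smooth : ∀ g, ContMDiff (𝓡 n) (𝓡 n) (⊤ : ℕ∞) (act g)) :
    ∃ (D : Set (ZMod p → ↥(Sph n))) (μ : (ZMod p → ↥(Sph n)) → ↥(Sph n)),
      IsOpen D ∧ (∀ x, (fun _ => x) ∈ D) ∧ ContinuousOn μ D ∧ (∀ x, μ (fun _ => x) = x) ∧
      ∀ k m, m ∈ D → (fun g => act k (m (g + k))) ∈ D ∧
        μ (fun g => act k (m (g + k))) = act k (μ m) := by
  classical
  let X := ↥(Sph n)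
  let E := EuclideanSpace ℝ (Fin (n + 1))
  have hcont : ∀ g, Continuous (act g) := fun g => (act_smooth g).continuous
  choose Ψ hΨ hΨe using fun g => smooth_ext (act g) (act_smooth g)
  choose C hC0 hC using fun g => taylor_bound (Ψ g) (hΨ g)
  have hΨs : ∀ g (x : X), Ψ g x.1 = (act g x).1 := by
    intro g x
    have h : ‖x.1‖ = 1 := mem_sphere_zero_iff_norm.mp x.2
    rw [hΨe g x.1 (sph_ne_zero x) (by rw [h]; norm_num), nrmz_sphere]
  let CC : ℝ := ∑ g, C g
  have hCC0 : 0 ≤ CC := Finset.sum_nonneg fun g _ => hC0 g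
  have hCC : ∀ g, C g ≤ CC := fun g =>
    Finset.single_le_sum (f := C) (fun i _ => hC0 i) (Finset.mem_univ g)
  obtain ⟨Q, hQdef⟩ : ∃ Q : (ZMod p → X) → X → ℝ, ∀ m x,
      Q m x = ∑ g, ∑ h, ‖(act h x).1 - (act h (m g)).1‖ ^ 2 := ⟨_, fun _ _ => rfl⟩
  have hQc : Continuous (Function.uncurry Q) := by
    have hQe : Function.uncurry Q = fun q : (ZMod p → X) × X =>
        ∑ g, ∑ h, ‖(act h q.2).1 - (act h (q.1 g)).1‖ ^ 2 := by
      ext q; exact hQdef q.1 q.2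
    rw [hQe]
    refine continuous_finsetSum _ fun g _ => continuous_finsetSum _ fun h _ => ?_
    refine (Continuous.norm ?_).pow 2
    refine (continuous_subtype_val.comp ((hcont h).comp continuous_snd)).sub
      (continuous_subtype_val.comp ((hcont h).comp ((continuous_apply g).comp continuous_fst)))
  have hp : (0 : ℝ) < p := by exact_mod_cast Nat.pos_of_ne_zero (NeZero.ne p)
  let η : ℝ := 1 / (4 * p * (CC + 1))
  have hη : 0 < η := by positivity
  let D : Set (ZMod p → X) := {m | ∃ x, Q m x < η ^ 2}
  have hDo : IsOpen D := by
    have : D = ⋃ x, {m | Q m x < η ^ 2} := by ext m; simp [D]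
    rw [this]
    refine isOpen_iUnion fun x => isOpen_lt ?_ continuous_const
    have := hQc.comp (Continuous.prodMk_left x)
    exact this
  have hex : ∀ m, ∃ x, ∀ y, Q m x ≤ Q m y := by
    intro m
    have : Nonempty X := ⟨m 0⟩
    have hc : Continuous (Q m) := hQc.comp (continuous_const.prodMk continuous_id)
    obtain ⟨x, _, hx⟩ := isCompact_univ.exists_isMinOn univ_nonempty hc.continuousOn
    exact ⟨x, fun y => hx (mem_univ y)⟩
  choose μ hμ using hex
  have huniq : ∀ m ∈ D, ∀ x y, (∀ z, Q m x ≤ Q m z) → (∀ z, Q m y ≤ Q m z) → x = y := by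
    rintro m ⟨x', hx'⟩ x y hx hy
    have hQx : Q m x < η ^ 2 := lt_of_le_of_lt (hx x') hx'
    have hQxy : Q m y = Q m x := le_antisymm (hy x) (hx y)
    have hx1 : ‖x.1‖ = 1 := mem_sphere_zero_iff_norm.mp x.2
    have hy1 : ‖y.1‖ = 1 := mem_sphere_zero_iff_norm.mp y.2
    let w : ZMod p → ZMod p → E := fun g h => (act h x).1 - (act h (m g)).1
    have hw : ∀ g h, ‖w g h‖ ≤ η := by
      intro g h
      have h1 : ‖w g h‖ ^ 2 ≤ Q m x := by
        rw [hQdef]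
        calc ‖w g h‖ ^ 2 ≤ ∑ h, ‖w g h‖ ^ 2 :=
              Finset.single_le_sum (f := fun h => ‖w g h‖ ^ 2) (fun i _ => by positivity)
                (Finset.mem_univ h)
          _ ≤ ∑ g, ∑ h, ‖w g h‖ ^ 2 :=
              Finset.single_le_sum (f := fun g => ∑ h, ‖w g h‖ ^ 2)
                (fun i _ => Finset.sum_nonneg fun j _ => by positivity) (Finset.mem_univ g)
      exact le_of_lt (lt_of_pow_lt_pow_left₀ 2 hη.le (lt_of_le_of_lt h1 hQx))
    let d : E := y.1 - x.1
    let L : ZMod p → E →L[ℝ] E := fun h => fderiv ℝ (Ψ h) x.1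
    -- first order condition
    have hfo : ∑ g, ∑ h, inner ℝ (w g h) (L h d) = 0 := by
      let Θ : E → ℝ := fun z => ∑ g, ∑ h, ‖Ψ h z - (act h (m g)).1‖ ^ 2
      have hmin : IsLocalMin Θ x.1 := by
        have : {z : E | 1 / 2 < ‖z‖} ∈ nhds x.1 :=
          (isOpen_lt continuous_const continuous_norm).mem_nhds (by
            show 1 / 2 < ‖x.1‖
            rw [hx1]; norm_num)
        filter_upwards [this] with z hz
        have hz : 1 / 2 < ‖z‖ := hz
        have hz0 : z ≠ 0 := by rintro rfl; rw [norm_zero] at hz; linarith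
        have e1 : Θ z = Q m (nrmz ⟨z, hz0⟩) := by
          rw [hQdef]
          refine Finset.sum_congr rfl fun g _ => Finset.sum_congr rfl fun h _ => ?_
          rw [hΨe h z hz0 hz.le]
        have e2 : Θ x.1 = Q m x := by
          rw [hQdef]
          refine Finset.sum_congr rfl fun g _ => Finset.sum_congr rfl fun h _ => ?_
          rw [hΨs]
        rw [e1, e2]
        exact hx _
      have hder : HasFDerivAt Θ (∑ g, ∑ h, 2 • (innerSL ℝ (w g h)).comp (L h)) x.1 := by
        refine HasFDerivAt.fun_sum fun g _ => HasFDerivAt.fun_sum fun h _ => ?_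
        have h1 : HasFDerivAt (fun z => Ψ h z - (act h (m g)).1) (L h) x.1 :=
          (((hΨ h).differentiable (by norm_num) x.1).hasFDerivAt).sub_const _
        have h2 := h1.norm_sq
        rw [hΨs] at h2
        exact h2
      have h0 := hmin.hasFDerivAt_eq_zero hder
      have h1 := congrArg (fun T : E →L[ℝ] ℝ => T d) h0
      simp only [sum_apply, smul_apply, zero_apply,
        ContinuousLinearMap.comp_apply, innerSL_apply_apply,
        nsmul_eq_mul] at h1
      simp_rw [← Finset.mul_sum] at h1
      push_cast at h1
      linarith
    let Δ : ZMod p → E := fun h => (act h y).1 - (act h x).1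
    let R : ZMod p → E := fun h => Δ h - L h d
    have hR : ∀ h, ‖R h‖ ≤ CC * ‖d‖ ^ 2 := by
      intro h
      have := hC h x.1 y.1 hx1 hy1
      rw [hΨs, hΨs] at this
      exact this.trans (mul_le_mul_of_nonneg_right (hCC h) (by positivity))
    have hQd : ∑ g, ∑ h, (‖Δ h‖ ^ 2 + 2 * inner ℝ (w g h) (R h)) = 0 := by
      have e1 : ∀ g h, ‖Δ h‖ ^ 2 + 2 * inner ℝ (w g h) (R h) =
          (‖(act h y).1 - (act h (m g)).1‖ ^ 2 - ‖(act h x).1 - (act h (m g)).1‖ ^ 2)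
            - 2 * inner ℝ (w g h) (L h d) := by
        intro g h
        have : (act h y).1 - (act h (m g)).1 = w g h + Δ h := by simp [w, Δ]
        rw [this, norm_add_sq_real]
        simp only [R, inner_sub_right]
        simp only [w]
        ring
      simp_rw [e1, Finset.sum_sub_distrib, ← Finset.mul_sum]
      rw [hfo]
      have : ∑ g, ∑ h, ‖(act h y).1 - (act h (m g)).1‖ ^ 2
        = ∑ g, ∑ h, ‖(act h x).1 - (act h (m g)).1‖ ^ 2 := by
        rw [← hQdef, ← hQdef]; exact hQxy
      rw [this]; ring
    have hlow : ∀ g : ZMod p, ‖d‖ ^ 2 - 2 * p * CC * η * ‖d‖ ^ 2 ≤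
        ∑ h, (‖Δ h‖ ^ 2 + 2 * inner ℝ (w g h) (R h)) := by
      intro g
      have h1 : ‖d‖ ^ 2 ≤ ∑ h, ‖Δ h‖ ^ 2 := by
        have : ‖d‖ ^ 2 = ‖Δ 0‖ ^ 2 := by simp only [Δ, act_zero, d]
        rw [this]
        exact Finset.single_le_sum (f := fun h => ‖Δ h‖ ^ 2) (fun i _ => by positivity)
          (Finset.mem_univ 0)
      have h2 : ∑ h : ZMod p, (-(2 * (η * (CC * ‖d‖ ^ 2)))) ≤ ∑ h, 2 * inner ℝ (w g h) (R h) := by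
        refine Finset.sum_le_sum fun h _ => ?_
        have a1 : |inner ℝ (w g h) (R h)| ≤ ‖w g h‖ * ‖R h‖ := abs_real_inner_le_norm _ _
        have a2 : ‖w g h‖ * ‖R h‖ ≤ η * (CC * ‖d‖ ^ 2) :=
          mul_le_mul (hw g h) (hR h) (norm_nonneg _) hη.le
        have a3 := neg_abs_le (inner ℝ (w g h) (R h))
        linarith
      rw [Finset.sum_const, Finset.card_univ, ZMod.card, nsmul_eq_mul] at h2
      rw [Finset.sum_add_distrib]
      linarith
    have hfin : (p : ℝ) * (‖d‖ ^ 2 - 2 * p * CC * η * ‖d‖ ^ 2) ≤ 0 := by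
      have := Finset.sum_le_sum (s := Finset.univ) fun g (_ : g ∈ Finset.univ) => hlow g
      rw [hQd, Finset.sum_const, Finset.card_univ, ZMod.card, nsmul_eq_mul] at this
      exact this
    have hηle : 2 * p * CC * η ≤ 1 / 2 := by
      simp only [η]
      rw [mul_one_div, div_le_div_iff₀ (by positivity) (by norm_num)]
      nlinarith
    have hd : ‖d‖ ^ 2 ≤ 0 := by
      by_contra hcon
      push Not at hcon
      have : 0 < (p : ℝ) * (‖d‖ ^ 2 - 2 * p * CC * η * ‖d‖ ^ 2) := by
        apply mul_pos hp
        nlinarith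
      linarith
    have hd0 : d = 0 := by
      have : ‖d‖ = 0 := by nlinarith [norm_nonneg d]
      exact norm_eq_zero.mp this
    exact Subtype.ext (sub_eq_zero.mp hd0).symm
  have hQinv : ∀ k m x, Q (fun g => act k (m (g + k))) (act k x) = Q m x := by
    intro k m x
    simp only [hQdef, ← act_add]
    refine (Equiv.sum_comp (Equiv.addRight k)
      (fun g => ∑ h, ‖(act (h + k) x).1 - (act (h + k) (m g)).1‖ ^ 2)).trans ?_
    refine Finset.sum_congr rfl fun g _ => ?_
    exact Equiv.sum_comp (Equiv.addRight k) (fun h => ‖(act h x).1 - (act h (m g)).1‖ ^ 2)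
  have hconst : ∀ x, (fun _ => x) ∈ D := fun x => ⟨x, by
    have : Q (fun _ => x) x = 0 := by simp [hQdef]
    rw [this]; positivity⟩
  refine ⟨D, μ, hDo, hconst, argmin_continuousOn Q hQc D μ (fun m _ => hμ m) huniq, ?_, ?_⟩
  · intro x
    refine huniq _ (hconst x) _ _ (hμ _) fun z => ?_
    have : Q (fun _ => x) x = 0 := by simp [hQdef]
    rw [this, hQdef]
    exact Finset.sum_nonneg fun g _ => Finset.sum_nonneg fun h _ => by positivity
  · rintro k m ⟨x, hx⟩
    have hD' : (fun g => act k (m (g + k))) ∈ D := ⟨act k x, by rw [hQinv]; exact hx⟩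
    refine ⟨hD', huniq _ hD' _ _ (hμ _) fun z => ?_⟩
    have hz : z = act k (act (-k) z) := by rw [← act_add, add_neg_cancel, act_zero]
    rw [hz, hQinv, hQinv]
    exact hμ m _

end Averaging2

section Extension

lemma tietzeOn {Z X : Type} [TopologicalSpace Z] [NormalSpace Z] [TopologicalSpace X]
    (M : Set X) [TietzeExtension.{0, 0} ↥M] {A : Set Z} (hA : IsClosed A) (f : Z → X)
    (hf : ContinuousOn f A) (hM : ∀ z ∈ A, f z ∈ M) :
    ∃ f' : Z → X, Continuous f' ∧ (∀ z, f' z ∈ M) ∧ ∀ z ∈ A, f' z = f z := by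
  let F : C(A, M) := ⟨fun z => ⟨f z, hM z z.2⟩,
    (continuousOn_iff_continuous_domRestrict.mp hf).subtype_mk _⟩
  obtain ⟨F', hF'⟩ := ContinuousMap.exists_restrict_eq hA F
  refine ⟨fun z => (F' z).1, continuous_subtype_val.comp F'.continuous, fun z => (F' z).2, ?_⟩
  intro z hz
  have := congrArg (fun T : C(A, M) => (T ⟨z, hz⟩).1) hF'
  exact this

/-- closed invariant set with an equivariant map into `M`. -/
structure GoodExt {G Z X : Type} [TopologicalSpace Z] [TopologicalSpace X]
    (aZ : G → Z → Z) (act : G → X → X) (M : Set X) (B : Set Z) (f : Z → X) : Prop where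
  closed : IsClosed B
  inv : ∀ g z, z ∈ B → aZ g z ∈ B
  cont : ContinuousOn f B
  maps : ∀ z ∈ B, f z ∈ M
  equiv : ∀ g z, z ∈ B → f (aZ g z) = act g (f z)

lemma free_step {G Z X : Type} [AddCommGroup G] [Finite G] [TopologicalSpace Z] [NormalSpace Z]
    [TopologicalSpace X] (M : Set X) [TietzeExtension.{0, 0} ↥M]
    (aZ : G → Z → Z) (aZa : ∀ g h z, aZ (g + h) z = aZ g (aZ h z))
    (aZc : ∀ g, Continuous (aZ g))
    (act : G → X → X) (act_zero : ∀ x, act 0 x = x)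
    (act_add : ∀ g h x, act (g + h) x = act g (act h x)) (actc : ∀ g, Continuous (act g))
    (hMinv : ∀ g x, x ∈ M → act g x ∈ M)
    {B : Set Z} {f : Z → X} (hB : GoodExt aZ act M B f) {C : Set Z} (hC : IsClosed C)
    (hfree : ∀ z ∈ C, ∀ g, g ≠ 0 → aZ g z ∉ C) :
    ∃ f', GoodExt aZ act M (B ∪ ⋃ g, aZ g ⁻¹' C) f' ∧ ∀ z ∈ B, f' z = f z := by
  classical
  obtain ⟨c, hc, hcM, hcf⟩ := tietzeOn M (hB.closed.inter hC) f (hB.cont.mono inter_subset_left)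
    (fun z hz => hB.maps z hz.1)
  let f' : Z → X := fun z => if h : ∃ g, aZ g z ∈ C then
    act (-(h.choose)) (c (aZ h.choose z)) else f z
  have key : ∀ g z, aZ g z ∈ C → f' z = act (-g) (c (aZ g z)) := by
    intro g z hg
    have hex : ∃ g, aZ g z ∈ C := ⟨g, hg⟩
    have hu : hex.choose = g := by
      by_contra hne
      refine hfree _ hg (hex.choose - g) (sub_ne_zero.mpr hne) ?_
      rw [← aZa, sub_add_cancel]
      exact hex.choose_spec
    simp only [f', dif_pos hex]
    rw [hu]
  have hfB : ∀ z ∈ B, f' z = f z := by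
    intro z hz
    by_cases hex : ∃ g, aZ g z ∈ C
    · obtain ⟨g, hg⟩ := hex
      rw [key g z hg, hcf _ ⟨hB.inv g z hz, hg⟩, hB.equiv g z hz, ← act_add, neg_add_cancel,
        act_zero]
    · simp only [f', dif_neg hex]
  have hcl : ∀ g, IsClosed (aZ g ⁻¹' C) := fun g => hC.preimage (aZc g)
  refine ⟨f', ⟨hB.closed.union (isClosed_iUnion_of_finite hcl), ?_, ?_, ?_, ?_⟩, hfB⟩
  · rintro g z (hz | hz)
    · exact Or.inl (hB.inv g z hz)
    · obtain ⟨h, hh⟩ := mem_iUnion.mp hz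
      refine Or.inr (mem_iUnion.mpr ⟨h - g, ?_⟩)
      change aZ (h - g) (aZ g z) ∈ C
      rw [← aZa, sub_add_cancel]; exact hh
  · refine ContinuousOn.union_of_isClosed (hB.cont.congr hfB) ?_ hB.closed
      (isClosed_iUnion_of_finite hcl)
    refine (locallyFinite_of_finite _).continuousOn_iUnion hcl fun g => ?_
    refine ContinuousOn.congr (f := fun z => act (-g) (c (aZ g z))) ?_ (fun z hz => key g z hz)
    exact ((actc _).comp (hc.comp (aZc g))).continuousOn
  · rintro z (hz | hz)
    · rw [hfB z hz]; exact hB.maps z hz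
    · obtain ⟨h, hh⟩ := mem_iUnion.mp hz
      rw [key h z hh]; exact hMinv _ _ (hcM _)
  · rintro g z (hz | hz)
    · rw [hfB _ (hB.inv g z hz), hfB z hz]; exact hB.equiv g z hz
    · obtain ⟨h, hh⟩ := mem_iUnion.mp hz
      have e : aZ (h - g) (aZ g z) = aZ h z := by rw [← aZa, sub_add_cancel]
      rw [key h z hh, key (h - g) (aZ g z) (by rw [e]; exact hh), e, ← act_add]
      congr 1; abel

lemma free_nhd {p : ℕ} (hp : p.Prime) {Z : Type} [TopologicalSpace Z] [T2Space Z] [RegularSpace Z]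
    (aZ : ZMod p → Z → Z) (aZ0 : ∀ z, aZ 0 z = z)
    (aZa : ∀ g h z, aZ (g + h) z = aZ g (aZ h z)) (aZc : ∀ g, Continuous (aZ g))
    (z : Z) (hz : z ∉ fixedSet aZ) :
    ∃ C ∈ nhds z, IsClosed C ∧ ∀ w ∈ C, ∀ g, g ≠ 0 → aZ g w ∉ C := by
  have : Fact p.Prime := ⟨hp⟩
  have hfr : ∀ g : ZMod p, g ≠ 0 → aZ g z ≠ z := by
    intro g hg h
    apply hz
    intro k
    have hn : ∀ m : ℕ, aZ (m • g) z = z := by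
      intro m
      induction m with
      | zero => rw [zero_smul, aZ0]
      | succ m ih => rw [succ_nsmul, aZa, h, ih]
    have := hn (k * g⁻¹).val
    rwa [nsmul_eq_mul, ZMod.natCast_zmod_val, mul_assoc, inv_mul_cancel₀ hg, mul_one] at this
  have hW : ∀ g : ZMod p, ∃ W ∈ nhds z, g ≠ 0 → ∀ w ∈ W, aZ g w ∉ W := by
    intro g
    by_cases hg : g = 0
    · exact ⟨univ, Filter.univ_mem, fun h => absurd hg h⟩
    · obtain ⟨U, V, hU, hV, hzU, hzV, hd⟩ := t2_separation (hfr g hg).symm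
      refine ⟨U ∩ aZ g ⁻¹' V, Filter.inter_mem (hU.mem_nhds hzU)
        ((hV.preimage (aZc g)).mem_nhds hzV), fun _ w hw hw' => ?_⟩
      exact Set.disjoint_left.mp hd hw'.1 hw.2
  choose W hWn hWf using hW
  obtain ⟨C, hCn, hCc, hCW⟩ := exists_mem_nhds_isClosed_subset
    ((Filter.iInter_mem (f := nhds z)).mpr hWn)
  refine ⟨C, hCn, hCc, fun w hw g hg hgw => ?_⟩
  exact hWf g hg w (mem_iInter.mp (hCW hw) g) (mem_iInter.mp (hCW hgw) g)

theorem equiv_extension {p : ℕ} (hp : p.Prime) {Z X : Type} [TopologicalSpace Z] [CompactSpace Z]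
    [T2Space Z] [TopologicalSpace X] (M : Set X) (hMo : IsOpen M) [TietzeExtension.{0, 0} ↥M]
    (aZ : ZMod p → Z → Z) (aZ0 : ∀ z, aZ 0 z = z)
    (aZa : ∀ g h z, aZ (g + h) z = aZ g (aZ h z)) (aZc : ∀ g, Continuous (aZ g))
    (act : ZMod p → X → X) (act_zero : ∀ x, act 0 x = x)
    (act_add : ∀ g h x, act (g + h) x = act g (act h x)) (actc : ∀ g, Continuous (act g))
    (hMinv : ∀ g x, x ∈ M → act g x ∈ M) [TietzeExtension.{0, 0} ↥(M ∩ fixedSet act)]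
    (hav : ∃ (D : Set (ZMod p → X)) (μ : (ZMod p → X) → X), IsOpen D ∧
      (∀ x, (fun _ => x) ∈ D) ∧ ContinuousOn μ D ∧ (∀ x, μ (fun _ => x) = x) ∧
      ∀ k m, m ∈ D → (fun g => act k (m (g + k))) ∈ D ∧
        μ (fun g => act k (m (g + k))) = act k (μ m))
    {A : Set Z} {f : Z → X} (hA : GoodExt aZ act M A f) :
    ∃ f', GoodExt aZ act M univ f' ∧ ∀ z ∈ A, f' z = f z := by
  classical
  have : Fact p.Prime := ⟨hp⟩
  have : NeZero p := ⟨hp.ne_zero⟩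
  obtain ⟨D, μ, hDo, hDc, hμ, hμc, hDk⟩ := hav
  let ZG : Set Z := fixedSet aZ
  have hZGc : IsClosed ZG := by
    have : ZG = ⋂ g, {z | aZ g z = z} := by ext z; simp [ZG, fixedSet]
    rw [this]
    exact isClosed_iInter fun g => isClosed_eq (aZc g) continuous_id
  obtain ⟨f1, hf1, hf1M, hf1f⟩ := tietzeOn (M ∩ fixedSet act) (hA.closed.inter hZGc) f
    (hA.cont.mono inter_subset_left) (fun z hz => ⟨hA.maps z hz.1, fun g => by
      rw [← hA.equiv g z hz.1, hz.2 g]⟩)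
  let fb : Z → X := fun z => if z ∈ A then f z else f1 z
  have hfbA : ∀ z ∈ A, fb z = f z := fun z hz => if_pos hz
  have hfbG : ∀ z ∈ ZG, fb z = f1 z := by
    intro z hz
    by_cases h : z ∈ A
    · rw [hfbA z h, hf1f z ⟨h, hz⟩]
    · exact if_neg h
  have hfbM : ∀ z ∈ A ∪ ZG, fb z ∈ M := by
    rintro z (hz | hz)
    · rw [hfbA z hz]; exact hA.maps z hz
    · rw [hfbG z hz]; exact (hf1M z).1
  have hBinv : ∀ g z, z ∈ A ∪ ZG → aZ g z ∈ A ∪ ZG := by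
    rintro g z (hz | hz)
    · exact Or.inl (hA.inv g z hz)
    · rw [hz g]; exact Or.inr hz
  have hfbe : ∀ g z, z ∈ A ∪ ZG → fb (aZ g z) = act g (fb z) := by
    rintro g z (hz | hz)
    · rw [hfbA _ (hA.inv g z hz), hfbA z hz, hA.equiv g z hz]
    · rw [hz g, hfbG z hz, (hf1M z).2 g]
  have hBc : IsClosed (A ∪ ZG) := hA.closed.union hZGc
  have hfbc : ContinuousOn fb (A ∪ ZG) :=
    ContinuousOn.union_of_isClosed (hA.cont.congr hfbA) (hf1.continuousOn.congr hfbG)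
      hA.closed hZGc
  obtain ⟨f2, hf2, hf2M, hf2b⟩ := tietzeOn M hBc fb hfbc hfbM
  let m : Z → ZMod p → X := fun z g => act (-g) (f2 (aZ g z))
  have hm : Continuous m := continuous_pi fun g => (actc _).comp (hf2.comp (aZc g))
  have hmk : ∀ k z, m (aZ k z) = fun g => act k (m z (g + k)) := by
    intro k z
    funext g
    simp only [m]
    rw [← act_add, ← aZa]
    congr 1; abel
  have hmB : ∀ z ∈ A ∪ ZG, m z = fun _ => fb z := by
    intro z hz
    funext g
    simp only [m]
    rw [hf2b _ (hBinv g z hz), hfbe g z hz, ← act_add, neg_add_cancel, act_zero]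
  let N : Set Z := m ⁻¹' (D ∩ μ ⁻¹' M)
  have hNo : IsOpen N := (hμ.isOpen_inter_preimage hDo hMo).preimage hm
  have hBN : A ∪ ZG ⊆ N := by
    intro z hz
    change m z ∈ D ∩ μ ⁻¹' M
    rw [hmB z hz]
    exact ⟨hDc _, by rw [mem_preimage, hμc]; exact hfbM z hz⟩
  obtain ⟨O, hOo, hBO, hON⟩ := normal_exists_closure_subset hBc hNo hBN
  let B2 : Set Z := ⋂ g, aZ g ⁻¹' (closure O)
  have hB2N : B2 ⊆ N := fun z hz => hON (by simpa [aZ0] using mem_iInter.mp hz 0)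
  have hgood : GoodExt aZ act M B2 (fun z => μ (m z)) := by
    refine ⟨isClosed_iInter fun g => isClosed_closure.preimage (aZc g), ?_, ?_, ?_, ?_⟩
    · intro g z hz
      refine mem_iInter.mpr fun h => ?_
      change aZ h (aZ g z) ∈ closure O
      rw [← aZa]; exact mem_iInter.mp hz (h + g)
    · exact hμ.comp hm.continuousOn fun z hz => (hB2N hz).1
    · exact fun z hz => (hB2N hz).2
    · intro g z hz
      change μ (m (aZ g z)) = _
      rw [hmk]
      exact (hDk g (m z) (hB2N hz).1).2
  have hAB2 : A ⊆ B2 := fun z hz => mem_iInter.mpr fun g =>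
    subset_closure (hBO (Or.inl (hA.inv g z hz)))
  have hO2 : IsOpen (⋂ g, aZ g ⁻¹' O) := isOpen_iInter_of_finite fun g => hOo.preimage (aZc g)
  have hK : IsCompact (⋂ g, aZ g ⁻¹' O)ᶜ := hO2.isClosed_compl.isCompact
  have hind := hK.induction_on (p := fun S => ∀ B f, GoodExt aZ act M B f →
      ∃ B' f', GoodExt aZ act M B' f' ∧ B ∪ S ⊆ B' ∧ ∀ z ∈ B, f' z = f z)
    (fun B f h => ⟨B, f, h, by simp, fun _ _ => rfl⟩)
    (fun S T hST hT B f h => by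
      obtain ⟨B', f', h1, h2, h3⟩ := hT B f h
      exact ⟨B', f', h1, (union_subset_union_right _ hST).trans h2, h3⟩)
    (fun S T hS hT B f h => by
      obtain ⟨B', f', h1, h2, h3⟩ := hS B f h
      obtain ⟨B'', f'', h1', h2', h3'⟩ := hT B' f' h1
      refine ⟨B'', f'', h1', ?_, fun z hz => ?_⟩
      · rintro z (hz | hz | hz)
        · exact h2' (Or.inl (h2 (Or.inl hz)))
        · exact h2' (Or.inl (h2 (Or.inr hz)))
        · exact h2' (Or.inr hz)
      · rw [h3' z (h2 (Or.inl hz)), h3 z hz])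
    (fun z hz => by
      have hzf : z ∉ fixedSet aZ := by
        intro h
        apply hz
        refine mem_iInter.mpr fun g => ?_
        change aZ g z ∈ O
        rw [h g]
        exact hBO (Or.inr h)
      obtain ⟨C, hCn, hCc, hCf⟩ := free_nhd hp aZ aZ0 aZa aZc z hzf
      refine ⟨C, mem_nhdsWithin_of_mem_nhds hCn, fun B f h => ?_⟩
      obtain ⟨f', h1, h2⟩ := free_step M aZ aZa aZc act act_zero act_add actc hMinv h hCc hCf
      refine ⟨_, f', h1, union_subset_union_right _ ?_, h2⟩
      intro w hw
      exact mem_iUnion.mpr ⟨0, by rw [mem_preimage, aZ0]; exact hw⟩)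
  obtain ⟨B', f', h1, h2, h3⟩ := hind B2 _ hgood
  have : B' = univ := by
    refine eq_univ_of_forall fun z => h2 ?_
    by_cases h : z ∈ ⋂ g, aZ g ⁻¹' O
    · exact Or.inl (iInter_mono (fun g => preimage_mono subset_closure) h)
    · exact Or.inr h
  rw [this] at h1
  refine ⟨f', h1, fun z hz => ?_⟩
  rw [h3 z (hAB2 hz), hmB z (Or.inl hz), hμc, hfbA z hz]

end Extension

section Assembly

lemma tietze_sph (n : ℕ) (v : ↥(Sph n)) :
    TietzeExtension.{0, 0} ↥({v}ᶜ : Set ↥(Sph n)) := by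
  have : Fact (Module.finrank ℝ (EuclideanSpace ℝ (Fin (n + 1))) = n + 1) :=
    ⟨finrank_euclideanSpace_fin⟩
  have e := (stereographic' n v).toHomeomorphSourceTarget
  rw [stereographic'_source, stereographic'_target] at e
  have e2 : ↥({v}ᶜ : Set ↥(Sph n)) ≃ₜ (Fin n → ℝ) :=
    (e.trans (Homeomorph.Set.univ _)).trans (EuclideanSpace.equiv (Fin n) ℝ).toHomeomorph
  exact TietzeExtension.of_homeo e2

lemma tietze_fix {n k : ℕ} {F : Set ↥(Sph n)} (e : ↥F ≃ₜ ↥(Sph k)) (x0 : ↥(Sph n)) (h0 : x0 ∈ F) :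
    TietzeExtension.{0, 0} ↥({x0}ᶜ ∩ F : Set ↥(Sph n)) := by
  have := tietze_sph k (e ⟨x0, h0⟩)
  let e3 : ↥({x0}ᶜ ∩ F : Set ↥(Sph n)) ≃ₜ ↥({e ⟨x0, h0⟩}ᶜ : Set ↥(Sph k)) :=
    { toFun := fun x => ⟨e ⟨x.1, x.2.2⟩, fun h => x.2.1 (by
        have := e.injective h
        exact congrArg Subtype.val this)⟩
      invFun := fun y => ⟨(e.symm y.1).1, ⟨fun h => y.2 (by
        have h1 : e.symm y.1 = ⟨x0, h0⟩ := Subtype.ext h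
        have h2 := congrArg e h1
        rw [e.apply_symm_apply] at h2
        exact h2), (e.symm y.1).2⟩⟩
      left_inv := fun x => by
        apply Subtype.ext
        simp
      right_inv := fun y => by
        apply Subtype.ext
        simp
      continuous_toFun := by fun_prop
      continuous_invFun := by fun_prop }
  exact TietzeExtension.of_homeo e3

lemma homot {p : ℕ} (hp : p.Prime) {n k : ℕ} (act : ZMod p → ↥(Sph n) → ↥(Sph n))
    (act_zero : ∀ x, act 0 x = x)
    (act_add : ∀ g h x, act (g + h) x = act g (act h x))
    (act_smooth : ∀ g, ContMDiff (𝓡 n) (𝓡 n) (⊤ : ℕ∞) (act g))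
    (e : ↥(fixedSet act) ≃ₜ ↥(Sph k)) (x0 star : ↥(Sph n)) (h0 : x0 ∈ fixedSet act)
    (hs : star ∈ fixedSet act) (hne : star ≠ x0) (K : Set ↥(Sph n)) (hK : IsClosed K)
    (hKinv : ∀ g x, x ∈ K → act g x ∈ K) (h0K : x0 ∉ K) :
    ∃ η : ↥(Sph n) → C(I, ↥(Sph n)), ContinuousOn η K ∧
      ∀ x ∈ K, η x 0 = x ∧ η x 1 = star ∧ ∀ g t, η (act g x) t = act g (η x t) := by
  classical
  have : NeZero p := ⟨hp.ne_zero⟩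
  have hav := averaging act act_zero act_add act_smooth
  have actc : ∀ g, Continuous (act g) := fun g => (act_smooth g).continuous
  have := tietze_sph n x0
  have := tietze_fix e x0 h0
  have hMinv : ∀ g x, x ∈ ({x0}ᶜ : Set ↥(Sph n)) → act g x ∈ ({x0}ᶜ : Set ↥(Sph n)) := by
    intro g x hx h
    apply hx
    have h1 : act g x = x0 := h
    have h2 := congrArg (act (-g)) h1
    rw [← act_add, neg_add_cancel, act_zero, h0] at h2
    exact h2
  have : CompactSpace ↥K := isCompact_iff_compactSpace.mp hK.isCompact
  let aZ : ZMod p → ↥K × I → ↥K × I := fun g z => (⟨act g z.1.1, hKinv g _ z.1.2⟩, z.2)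
  let f : ↥K × I → ↥(Sph n) := fun z => if z.2 = 0 then z.1.1 else star
  have hA0 : IsClosed {z : ↥K × I | z.2 = 0} := isClosed_eq continuous_snd continuous_const
  have hA1 : IsClosed {z : ↥K × I | z.2 = 1} := isClosed_eq continuous_snd continuous_const
  have hf0 : ∀ z ∈ {z : ↥K × I | z.2 = 0}, f z = z.1.1 := fun z hz => if_pos hz
  have hf1 : ∀ z ∈ {z : ↥K × I | z.2 = 1}, f z = star := by
    intro z hz
    refine if_neg ?_
    have : z.2 = 1 := hz
    rw [this]; exact one_ne_zero
  have hgood : GoodExt aZ act ({x0}ᶜ) ({z : ↥K × I | z.2 = 0} ∪ {z : ↥K × I | z.2 = 1}) f := by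
    refine ⟨hA0.union hA1, ?_, ?_, ?_, ?_⟩
    · exact fun g z hz => hz
    · refine ContinuousOn.union_of_isClosed ?_ ?_ hA0 hA1
      · exact ContinuousOn.congr (f := fun z : ↥K × I => z.1.1) (by fun_prop) hf0
      · exact ContinuousOn.congr (f := fun z => star) continuousOn_const hf1
    · rintro z (hz | hz)
      · rw [hf0 z hz]
        exact fun h => h0K (by rw [← mem_singleton_iff.mp h]; exact z.1.2)
      · rw [hf1 z hz]; exact hne
    · rintro g z (hz | hz)
      · rw [hf0 z hz, hf0 (aZ g z) hz]
      · rw [hf1 z hz, hf1 (aZ g z) hz, hs g]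
  obtain ⟨H, hH, hHf⟩ := equiv_extension hp ({x0}ᶜ) isOpen_compl_singleton aZ
    (fun z => by simp only [aZ, act_zero]) (fun g h z => by simp only [aZ, act_add])
    (fun g => by
      have := actc g
      fun_prop) act act_zero act_add actc hMinv hav hgood
  have hHc : Continuous H := continuousOn_univ.mp hH.cont
  let Hc : C(↥K, C(I, ↥(Sph n))) := ContinuousMap.curry ⟨H, hHc⟩
  refine ⟨fun x => if h : x ∈ K then Hc ⟨x, h⟩ else ContinuousMap.const _ star, ?_, ?_⟩
  · rw [continuousOn_iff_continuous_domRestrict]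
    convert Hc.continuous using 1
    funext x
    simp [Set.domRestrict]
  · intro x hx
    refine ⟨?_, ?_, ?_⟩
    · simp only [dif_pos hx]
      change H (⟨x, hx⟩, 0) = x
      rw [hHf _ (Or.inl rfl), hf0 _ rfl]
    · simp only [dif_pos hx]
      change H (⟨x, hx⟩, 1) = star
      rw [hHf _ (Or.inr rfl), hf1 _ rfl]
    · intro g t
      simp only [dif_pos hx, dif_pos (hKinv g x hx)]
      exact hH.equiv g (⟨x, hx⟩, t) trivial

lemma invTCcover_of {G X : Type} [TopologicalSpace X] (act : G → X → X) (k : ℕ)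
    (star : X) (V : Fin k → Set X) (hVo : ∀ i, IsOpen (V i))
    (hVinv : ∀ i g x, x ∈ V i → act g x ∈ V i)
    (hcov : ∀ x y, ∃ i, x ∈ V i ∧ y ∈ V i) (η : Fin k → X → C(I, X))
    (hηc : ∀ i, ContinuousOn (η i) (V i))
    (hη : ∀ i, ∀ x ∈ V i, η i x 0 = x ∧ η i x 1 = star ∧
      ∀ g t, η i (act g x) t = act g (η i x t)) : invTCcover act k := by
  let rev : C(I, I) := ⟨σ, by fun_prop⟩
  refine ⟨fun i => V i ×ˢ V i, fun i => (hVo i).prod (hVo i), ?_, fun i => ⟨?_, ?_⟩⟩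
  · refine eq_univ_of_forall fun z => ?_
    obtain ⟨i, h1, h2⟩ := hcov z.1 z.2
    exact mem_iUnion.mpr ⟨i, h1, h2⟩
  · exact fun g₁ g₂ q hq => ⟨hVinv i g₁ _ hq.1, hVinv i g₂ _ hq.2⟩
  · refine ⟨fun q => η i q.1, fun q => (η i q.2).comp rev, ?_, ?_, ?_, ?_⟩
    · exact (hηc i).comp continuousOn_fst fun q hq => hq.1
    · exact (ContinuousMap.continuous_precomp rev).comp_continuousOn
        ((hηc i).comp continuousOn_snd fun q hq => hq.2)
    · intro q hq
      refine ⟨(hη i _ hq.1).1, ?_, ?_⟩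
      · simp [rev, (hη i _ hq.2).1]
      · simp [rev, (hη i _ hq.2).2.1, (hη i _ hq.1).2.1]
    · intro g₁ g₂ q hq t
      exact ⟨(hη i _ hq.1).2.2 g₁ t, (hη i _ hq.2).2.2 g₂ (σ t)⟩

lemma three_points (k : ℕ) (hk : 0 < k) : ∃ a b c : ↥(Sph k), a ≠ b ∧ c ≠ a ∧ c ≠ b := by
  let v : EuclideanSpace ℝ (Fin (k + 1)) := EuclideanSpace.single 0 1
  let w : EuclideanSpace ℝ (Fin (k + 1)) := EuclideanSpace.single (Fin.last k) 1
  have hv0 : v 0 = 1 := by simp [v]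
  have hl : (0 : Fin (k + 1)) ≠ Fin.last k := by
    intro h; have := congrArg Fin.val h; simp at this; omega
  have hw0 : w 0 = 0 := by simp [w, hl]
  refine ⟨⟨v, by simp [v]⟩, ⟨-v, by simp [v]⟩, ⟨w, by simp [w]⟩, ?_, ?_, ?_⟩
  all_goals
    intro h
    have h1 := congrArg (fun z : ↥(Sph k) => z.1 0) h
    simp only [PiLp.neg_apply, hv0, hw0] at h1
    norm_num at h1

lemma upper {p : ℕ} (hp : p.Prime) {n k : ℕ} (hk : 0 < k) (act : ZMod p → ↥(Sph n) → ↥(Sph n))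
    (act_zero : ∀ x, act 0 x = x)
    (act_add : ∀ g h x, act (g + h) x = act g (act h x))
    (act_smooth : ∀ g, ContMDiff (𝓡 n) (𝓡 n) (⊤ : ℕ∞) (act g))
    (e : ↥(fixedSet act) ≃ₜ ↥(Sph k)) : invTCcover act 3 := by
  classical
  have : NeZero p := ⟨hp.ne_zero⟩
  have actc : ∀ g, Continuous (act g) := fun g => (act_smooth g).continuous
  obtain ⟨a, b, c, hab, hca, hcb⟩ := three_points k hk
  have hinj : ∀ u v : ↥(Sph k), u ≠ v → (e.symm u).1 ≠ (e.symm v).1 := fun u v h h' =>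
    h (e.symm.injective (Subtype.ext h'))
  set x0 := (e.symm a).1 with hx0
  set x1 := (e.symm b).1 with hx1
  set star := (e.symm c).1 with hstar
  have f0 : x0 ∈ fixedSet act := (e.symm a).2
  have f1 : x1 ∈ fixedSet act := (e.symm b).2
  have fs : star ∈ fixedSet act := (e.symm c).2
  have h01 : x0 ≠ x1 := hinj _ _ hab
  have hs0 : star ≠ x0 := hinj _ _ hca
  have hs1 : star ≠ x1 := hinj _ _ hcb
  let φ : ↥(Sph n) → ℝ := fun x => ∑ g, (dist (act g x) x0 - dist (act g x) x1)
  have hφc : Continuous φ := continuous_finsetSum _ fun g _ =>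
    ((actc g).dist continuous_const).sub ((actc g).dist continuous_const)
  have hφi : ∀ h x, φ (act h x) = φ x := by
    intro h x
    simp only [φ, ← act_add]
    exact Fintype.sum_equiv (Equiv.addRight h) _ _ fun g => rfl
  have hd : 0 < dist x0 x1 := dist_pos.mpr h01
  have hpp : (0 : ℝ) < p := by exact_mod_cast hp.pos
  have hφ0 : φ x0 = -(p * dist x0 x1) := by
    simp only [φ, f0 _, dist_self, Finset.sum_const, Finset.card_univ, ZMod.card, nsmul_eq_mul]
    ring
  have hφ1 : φ x1 = p * dist x0 x1 := by
    simp only [φ, f1 _, dist_self, Finset.sum_const, Finset.card_univ, ZMod.card, nsmul_eq_mul]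
    rw [dist_comm]; ring
  obtain ⟨r, hr⟩ : ∃ r, r = p * dist x0 x1 / 2 := ⟨_, rfl⟩
  have hr0 : 0 < r := by rw [hr]; positivity
  obtain ⟨η0, hη0c, hη0⟩ := homot hp act act_zero act_add act_smooth e x0 star f0 fs hs0
    {x | -r ≤ φ x} (isClosed_le continuous_const hφc)
    (fun g x hx => by
      change -r ≤ φ (act g x)
      rw [hφi]; exact hx)
    (fun h => by
      have h : -r ≤ φ x0 := h
      rw [hφ0] at h
      linarith)
  obtain ⟨η1, hη1c, hη1⟩ := homot hp act act_zero act_add act_smooth e x1 star f1 fs hs1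
    {x | φ x ≤ r} (isClosed_le hφc continuous_const)
    (fun g x hx => by
      change φ (act g x) ≤ r
      rw [hφi]; exact hx)
    (fun h => by
      have h : φ x1 ≤ r := h
      rw [hφ1] at h
      linarith)
  let η2 : ↥(Sph n) → C(I, ↥(Sph n)) := fun x => if φ x < 0 then η1 x else η0 x
  have hη2n : ∀ x, φ x < 0 → η2 x = η1 x := fun x h => if_pos h
  have hη2p : ∀ x, 0 < φ x → η2 x = η0 x := fun x h => if_neg (not_lt.mpr h.le)
  have o1 : IsOpen {x | φ x < 0} := isOpen_lt hφc continuous_const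
  have o2 : IsOpen {x | 0 < φ x} := isOpen_lt continuous_const hφc
  have hη2c : ContinuousOn η2 {x | φ x ≠ 0} := by
    have : {x | φ x ≠ 0} = {x | φ x < 0} ∪ {x | 0 < φ x} := by
      ext x; exact lt_or_lt_iff_ne.symm
    rw [this]
    refine ContinuousOn.union_of_isOpen ?_ ?_ o1 o2
    · refine (hη1c.mono fun x hx => ?_).congr fun x hx => hη2n x hx
      have hx : φ x < 0 := hx
      change φ x ≤ r
      linarith
    · refine (hη0c.mono fun x hx => ?_).congr fun x hx => hη2p x hx
      have hx : 0 < φ x := hx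
      change -r ≤ φ x
      linarith
  have hη2 : ∀ x, φ x ≠ 0 → η2 x 0 = x ∧ η2 x 1 = star ∧
      ∀ g t, η2 (act g x) t = act g (η2 x t) := by
    intro x hx
    rcases lt_or_gt_of_ne hx with h | h
    · rw [hη2n x h]
      have h' := hη1 x (show φ x ≤ r by linarith)
      refine ⟨h'.1, h'.2.1, fun g t => ?_⟩
      rw [hη2n _ (by rw [hφi]; exact h)]
      exact h'.2.2 g t
    · rw [hη2p x h]
      have h' := hη0 x (show -r ≤ φ x by linarith)
      refine ⟨h'.1, h'.2.1, fun g t => ?_⟩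
      rw [hη2p _ (by rw [hφi]; exact h)]
      exact h'.2.2 g t
  refine invTCcover_of act 3 star ![{x | -r < φ x}, {x | φ x < r}, {x | φ x ≠ 0}] ?_ ?_ ?_
    ![η0, η1, η2] ?_ ?_
  · intro i
    fin_cases i
    · exact isOpen_lt continuous_const hφc
    · exact isOpen_lt hφc continuous_const
    · exact isOpen_ne_fun hφc continuous_const
  · intro i g x
    fin_cases i
    · change -r < φ x → -r < φ (act g x)
      rw [hφi]; exact id
    · change φ x < r → φ (act g x) < r
      rw [hφi]; exact id
    · change φ x ≠ 0 → φ (act g x) ≠ 0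
      rw [hφi]; exact id
  · intro x y
    by_cases h1 : -r < φ x ∧ -r < φ y
    · exact ⟨0, h1⟩
    by_cases h2 : φ x < r ∧ φ y < r
    · exact ⟨1, h2⟩
    refine ⟨2, ?_⟩
    change φ x ≠ 0 ∧ φ y ≠ 0
    refine ⟨fun h => ?_, fun h => ?_⟩
    · rw [h] at h1 h2
      have a1 : ¬ (-r < φ y) := fun h' => h1 ⟨by linarith, h'⟩
      have a2 : ¬ (φ y < r) := fun h' => h2 ⟨by linarith, h'⟩
      linarith
    · rw [h] at h1 h2
      have a1 : ¬ (-r < φ x) := fun h' => h1 ⟨h', by linarith⟩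
      have a2 : ¬ (φ x < r) := fun h' => h2 ⟨h', by linarith⟩
      linarith
  · intro i
    fin_cases i
    · exact hη0c.mono fun x (hx : -r < φ x) => (show -r ≤ φ x from hx.le)
    · exact hη1c.mono fun x (hx : φ x < r) => (show φ x ≤ r from hx.le)
    · exact hη2c
  · intro i x
    fin_cases i
    · exact fun (hx : -r < φ x) => hη0 x (show -r ≤ φ x from hx.le)
    · exact fun (hx : φ x < r) => hη1 x (show φ x ≤ r from hx.le)
    · exact fun hx => hη2 x hx

lemma lower {p : ℕ} {n k : ℕ} (act : ZMod p → ↥(Sph n) → ↥(Sph n))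
    (e : ↥(fixedSet act) ≃ₜ ↥(Sph k)) (h : invTCcover act 1) : False := by
  obtain ⟨U, -, hcov, hU⟩ := h
  have hU0 : U 0 = univ := by
    refine eq_univ_of_forall fun z => ?_
    have hz : z ∈ ⋃ i, U i := by rw [hcov]; trivial
    obtain ⟨i, hi⟩ := mem_iUnion.mp hz
    rwa [Subsingleton.elim i 0] at hi
  obtain ⟨-, s₁, s₂, c1, c2, hs, heq⟩ := hU 0
  rw [hU0] at c1 c2 hs heq
  rw [continuousOn_univ] at c1 c2
  have hfix : ∀ x ∈ fixedSet act, ∀ y ∈ fixedSet act, ∀ t,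
      s₁ (x, y) t ∈ fixedSet act ∧ s₂ (x, y) t ∈ fixedSet act := by
    intro x hx y hy t
    refine ⟨fun g => ?_, fun g => ?_⟩
    · have := (heq g g (x, y) trivial t).1
      simp only [hx g, hy g] at this
      exact this.symm
    · have := (heq g g (x, y) trivial t).2
      simp only [hx g, hy g] at this
      exact this.symm
  have horb : ∀ x ∈ fixedSet act, orbit act x = {x} := by
    intro x hx
    ext y
    constructor
    · rintro ⟨g, hg⟩
      rw [hx g] at hg; exact hg.symm
    · intro h
      exact ⟨0, by rw [hx 0]; exact h.symm⟩
  let a : ↥(Sph k) := ⟨EuclideanSpace.single 0 1, by simp⟩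
  let y0 := e.symm a
  have hmid : ∀ x : ↥(fixedSet act), s₁ (x.1, y0.1) 1 = s₂ (x.1, y0.1) 0 := by
    intro x
    have h1 := (hs (x.1, y0.1) trivial).2.2
    rw [horb _ (hfix x x.2 y0 y0.2 1).1, horb _ (hfix x x.2 y0 y0.2 0).2] at h1
    exact singleton_eq_singleton_iff.mp h1
  let i1 : ContinuousMap.Homotopy (ContinuousMap.id ↥(Sph k))
      ⟨fun u => e ⟨s₁ ((e.symm u).1, y0.1) 1, (hfix _ (e.symm u).2 y0 y0.2 1).1⟩, by
        refine e.continuous.comp (Continuous.subtype_mk ?_ _)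
        exact (ContinuousEvalConst.continuous_eval_const 1).comp (c1.comp (by fun_prop))⟩ :=
    { toFun := fun q => e ⟨s₁ ((e.symm q.2).1, y0.1) q.1, (hfix _ (e.symm q.2).2 y0 y0.2 _).1⟩
      continuous_toFun := by
        refine e.continuous.comp (Continuous.subtype_mk ?_ _)
        exact (c1.comp (f := fun q : I × ↥(Sph k) => ((e.symm q.2).1, y0.1))
          (by fun_prop)).eval continuous_fst
      map_zero_left := fun u => by
        have : s₁ ((e.symm u).1, y0.1) 0 = (e.symm u).1 := (hs _ trivial).1
        simp [this]
      map_one_left := fun u => rfl }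
  let i2 : ContinuousMap.Homotopy 
      ⟨fun u => e ⟨s₁ ((e.symm u).1, y0.1) 1, (hfix _ (e.symm u).2 y0 y0.2 1).1⟩, by
        refine e.continuous.comp (Continuous.subtype_mk ?_ _)
        exact (ContinuousEvalConst.continuous_eval_const 1).comp (c1.comp (by fun_prop))⟩
      (ContinuousMap.const ↥(Sph k) a) :=
    { toFun := fun q => e ⟨s₂ ((e.symm q.2).1, y0.1) q.1, (hfix _ (e.symm q.2).2 y0 y0.2 _).2⟩
      continuous_toFun := by
        refine e.continuous.comp (Continuous.subtype_mk ?_ _)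
        exact (c2.comp (f := fun q : I × ↥(Sph k) => ((e.symm q.2).1, y0.1))
          (by fun_prop)).eval continuous_fst
      map_zero_left := fun u => by
        simp [hmid (e.symm u)]
      map_one_left := fun u => by
        have : s₂ ((e.symm u).1, y0.1) 1 = y0.1 := (hs _ trivial).2.1
        simp [this, y0] }
  let H := i1.trans i2
  exact sphere_no_contraction H.toContinuousMap a (fun x => H.apply_zero x) (fun x => H.apply_one x)

end Assembly

/-- Let `ℤ/p` act smoothly on the standard sphere `S^n` by a semilinear
action with path-connected fixed point set: the fixed point set is homeomorphic to `S^k`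
for some `0 < k ≤ n` and, in case `k = n - 2`, the complement of the fixed point set is
homotopy equivalent to `S¹`.  Then `2 ≤ TC^{ℤ/p}(S^n) ≤ 3`. -/
theorem invTC_semilinear_sphere_between_two_and_three (p : ℕ) (hp : p.Prime)
    (n k : ℕ) (hk : 0 < k) (hkn : k ≤ n)
    (act : ZMod p → ↥(Sph n) → ↥(Sph n))
    (act_zero : ∀ x, act 0 x = x)
    (act_add : ∀ g h x, act (g + h) x = act g (act h x))
    (act_smooth : ∀ g, ContMDiff (𝓡 n) (𝓡 n) (⊤ : ℕ∞) (act g))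
    (hhomeo : Nonempty (↥(fixedSet act) ≃ₜ ↥(Sph k)))
    (hcodim2 : k = n - 2 →
      Nonempty (ContinuousMap.HomotopyEquiv ↥(fixedSet act)ᶜ ↥(Sph 1))) :
    2 ≤ invTC act ∧ invTC act ≤ 3 := by
  obtain ⟨e⟩ := hhomeo
  refine ⟨?_, ?_⟩
  · refine le_sInf ?_
    rintro _ ⟨m, rfl, hm, hcov⟩
    rcases Nat.lt_or_ge m 2 with h | h
    · obtain rfl : m = 1 := by omega
      exact (lower act e hcov).elim
    · exact_mod_cast h
  · exact sInf_le ⟨3, rfl, by norm_num, upper hp hk act act_zero act_add act_smooth e⟩
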